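/- Let k and m be positive integers with 2 < m ≤ k. If A is an intersecting collection of k-multisets on {1,…,m} of maximum possible cardinality among all intersecting collections of k-multisets on {1,…,m}, then every multiset in A has at least m/2 distinct elements. -/

import Mathlib

/-! Let `S` be a minimal support occurring in an intersecting family `A`. No other support of `A`
is contained in `S`, so every other support meets `Sᶜ`; trading the members with support `S` for all
multisets with support `Sᶜ` therefore yields another intersecting family. There are
`(k - 1).choose (k - #S)` multisets of cardinality `k` with support `S`. As `k` is at least the
number of points, unimodality of the binomial coefficients shows that this trade strictly enlarges
`A` when `S` has fewer than half of the points. Hence in a maximum family the minimal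
supports, and with them all supports, contain at least half of the points. -/

open Finset

theorem strictMonoOn_choose (n : ℕ) : StrictMonoOn n.choose (Set.Iic (n / 2)) := by
  refine strictMonoOn_Iic_of_lt_succ fun r hr ↦ ?_
  have hpos : 0 < n.choose r := Nat.choose_pos (by omega)
  refine lt_of_mul_lt_mul_right ?_ (Nat.zero_le (r + 1))
  calc n.choose r * (r + 1)
    _ < n.choose r * (n - r) := Nat.mul_lt_mul_of_pos_left (by omega) hpos
    _ = n.choose (r + 1) * (r + 1) := (Nat.choose_succ_right_eq n r).symm

theorem choose_lt_choose_of_lt_add {n a b : ℕ} (hb : b ≤ n) (hba : b < a) (hn : n < a + b) :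
    n.choose a < n.choose b := by
  rcases lt_or_ge n a with hna | han
  · rw [Nat.choose_eq_zero_of_lt hna]
    exact Nat.choose_pos hb
  rw [← Nat.choose_symm han]
  have hmono := strictMonoOn_choose n
  rcases le_or_gt b (n / 2) with hsmall | hlarge
  · exact hmono (Set.mem_Iic.2 (by omega)) hsmall (by omega)
  · rw [← Nat.choose_symm hb]
    exact hmono (Set.mem_Iic.2 (by omega)) (Set.mem_Iic.2 (by omega)) (by omega)

section Exchange

variable {α β : Type*} [BooleanAlgebra α]

theorem intersecting_insert_compl_diff_singleton {F : Set α} {a : α} (hF : F.Intersecting)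
    (ha : Minimal (· ∈ F) a) (ha_top : a ≠ ⊤) : (insert aᶜ (F \ {a})).Intersecting := by
  refine (hF.mono Set.sdiff_subset).insert (by simpa using ha_top) ?_
  rintro b ⟨hb, hba⟩ hdisj
  exact hba (ha.eq_of_le hb (disjoint_compl_left_iff.1 hdisj))

theorem card_fiber_compl_le_card_fiber [DecidableEq α] [Fintype β] {f : β → α}
    {A : Finset β} (hA : MaximalFor (fun B : Finset β ↦ (f '' B).Intersecting) card A)
    {a : α} (ha : Minimal (· ∈ f '' A) a) (ha_top : a ≠ ⊤) :
    #{x | f x = aᶜ} ≤ #{x | f x = a} := by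
  classical
  have hcompl : ∀ x ∈ A, f x ≠ aᶜ := fun x hx hxa ↦
    hA.prop (Set.mem_image_of_mem f hx) ha.prop (hxa ▸ disjoint_compl_left)
  let B := {x ∈ A | f x ≠ a} ∪ ({x | f x = aᶜ} : Finset β)
  have hB : (f '' B).Intersecting := by
    refine (intersecting_insert_compl_diff_singleton hA.prop ha ha_top).mono ?_
    rintro _ ⟨x, hx, rfl⟩
    rcases mem_union.1 hx with hx | hx
    · exact .inr ⟨Set.mem_image_of_mem f (mem_filter.1 hx).1, (mem_filter.1 hx).2⟩
    · exact .inl (mem_filter.1 hx).2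
  have hBcard : #B = #{x ∈ A | f x ≠ a} + #{x | f x = aᶜ} :=
    card_union_of_disjoint <| disjoint_left.2 fun x hx hx' ↦
      hcompl x (mem_filter.1 hx).1 (mem_filter.1 hx').2
  have hAcard : #{x ∈ A | f x = a} + #{x ∈ A | f x ≠ a} = #A :=
    card_filter_add_card_filter_not _
  have hfiber : #{x ∈ A | f x = a} ≤ #{x | f x = a} :=
    card_le_card (filter_subset_filter _ (subset_univ A))
  have hBA : #B ≤ #A := (le_total #A #B).elim (hA.le_of_le hB) id
  omega

end Exchange

section Support

variable {α : Type*} [DecidableEq α] {k : ℕ}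

/-- The support of a `k`-multiset: the set of its distinct elements. -/
def symSupport (s : Sym α k) : Finset α :=
  (s : Multiset α).toFinset

@[simp]
theorem mem_symSupport {s : Sym α k} {x : α} : x ∈ symSupport s ↔ x ∈ s :=
  Multiset.mem_toFinset

theorem intersecting_image_symSupport {A : Finset (Sym α k)} :
    (symSupport '' (A : Set (Sym α k))).Intersecting ↔ ∀ s ∈ A, ∀ t ∈ A, ∃ x, x ∈ s ∧ x ∈ t := by
  simp [Set.Intersecting, not_disjoint_iff]

theorem card_finset_sym (S : Finset α) (n : ℕ) : #(S.sym n) = (#S).multichoose n := by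
  conv_lhs => rw [← attach_map_val (s := S), attach_eq_univ]
  rw [sym_map, card_map, sym_univ, card_univ, Sym.card_sym_eq_multichoose, Fintype.card_coe]

theorem symSupport_eq_iff_exists_append {S : Finset α} {n : ℕ} {s : Sym α (n + #S)} :
    symSupport s = S ↔ ∃ u ∈ S.sym n, u.append (.mk S.val S.card_val) = s := by
  constructor
  · intro hs
    have hle : S.val ≤ (s : Multiset α) := by
      conv_lhs => rw [← hs]
      exact Multiset.dedup_le _
    refine ⟨.mk (s - S.val) ?_, mem_sym_iff.2 fun x hx ↦ ?_,
      Subtype.ext (Multiset.sub_add_cancel hle)⟩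
    · rw [Multiset.card_sub hle, Sym.card_coe, card_val, Nat.add_sub_cancel]
    · rw [← hs, mem_symSupport]
      exact Multiset.mem_of_le (Multiset.sub_le_self _ _) hx
  · rintro ⟨u, hu, rfl⟩
    ext x
    rw [mem_symSupport, Sym.mem_append_iff]
    exact or_iff_right_of_imp (mem_sym_iff.1 hu x)

variable [Fintype α]

/-- The truncated `k - 1` is harmless: for `k = 0` and `S = ∅` both sides are `1`. -/
theorem card_symSupport_fiber {S : Finset α} (hS : #S ≤ k) :
    #{s : Sym α k | symSupport s = S} = (k - 1).choose (k - #S) := by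
  obtain ⟨n, rfl⟩ := Nat.exists_eq_add_of_le' hS
  have hfiber : ({s | symSupport s = S} : Finset (Sym α (n + #S))) =
      (S.sym n).image (·.append (.mk S.val S.card_val)) := by
    ext s
    simp only [mem_filter_univ, mem_image, symSupport_eq_iff_exists_append]
  rw [hfiber, card_image_of_injective _ fun _ _ ↦ (Sym.append_inj_left _).1, card_finset_sym,
    Nat.multichoose_eq, Nat.add_sub_cancel, Nat.add_comm]

theorem card_symSupport_fiber_lt_compl (hk : Fintype.card α ≤ k) {S : Finset α}
    (hS : 2 * #S < Fintype.card α) :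
    #{s : Sym α k | symSupport s = S} < #{s : Sym α k | symSupport s = Sᶜ} := by
  have hcompl : #Sᶜ + #S = Fintype.card α := card_compl_add_card S
  rw [card_symSupport_fiber (by omega), card_symSupport_fiber (by omega)]
  exact choose_lt_choose_of_lt_add (by omega) (by omega) (by omega)

theorem stmt_17_general (hk : Fintype.card α ≤ k) (A : Finset (Sym α k))
    (hint : ∀ s ∈ A, ∀ t ∈ A, ∃ x, x ∈ s ∧ x ∈ t)
    (hmax : ∀ B : Finset (Sym α k), (∀ s ∈ B, ∀ t ∈ B, ∃ x, x ∈ s ∧ x ∈ t) → #B ≤ #A) :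
    ∀ s ∈ A, Fintype.card α ≤ 2 * #(s : Multiset α).toFinset := by
  intro s hs
  have hA : MaximalFor
      (fun B : Finset _ ↦ (symSupport '' (B : Set (Sym α k))).Intersecting) card A :=
    ⟨intersecting_image_symSupport.2 hint, fun _ hB _ ↦
      hmax _ (intersecting_image_symSupport.1 hB)⟩
  obtain ⟨S, hSs, hS⟩ := exists_minimal_le_of_wellFoundedLT (· ∈ symSupport '' A) (symSupport s)
    (Set.mem_image_of_mem _ hs)
  have hS_half : Fintype.card α ≤ 2 * #S := by
    by_contra! hlt
    have hS_top : S ≠ ⊤ := by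
      rintro rfl
      rw [top_eq_univ, card_univ] at hlt
      omega
    exact (card_symSupport_fiber_lt_compl hk hlt).not_ge
      (card_fiber_compl_le_card_fiber hA hS hS_top)
  exact hS_half.trans (Nat.mul_le_mul_left 2 (card_le_card hSs))

end Support

/-- For `2 < m ≤ k`, if `A` is an intersecting collection of `k`-multisets on `{1,…,m}`
of maximum possible cardinality, then every multiset in `A` has at least `m/2`
distinct elements. -/
theorem stmt_17 (k m : ℕ) (hm : 2 < m) (hmk : m ≤ k)
    (A : Finset (Sym (Fin m) k))
    (hint : ∀ s ∈ A, ∀ t ∈ A, ∃ x : Fin m, x ∈ s ∧ x ∈ t)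
    (hmax : ∀ B : Finset (Sym (Fin m) k),
      (∀ s ∈ B, ∀ t ∈ B, ∃ x : Fin m, x ∈ s ∧ x ∈ t) → B.card ≤ A.card) :
    ∀ s ∈ A, m ≤ 2 * (s : Multiset (Fin m)).toFinset.card := by
  simpa only [Fintype.card_fin] using
    stmt_17_general (by rwa [Fintype.card_fin]) A hint hmax
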